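/- Let λ < 0 and n ≥ 2 be an integer. There exists R₀ > 0 such that for every R ≥ R₀ the following holds: if (r, s, φ) is a solution of the transformed system on a right-maximal interval [0, T) (i.e. the solution cannot be extended as a solution of the transformed system, with r² > s², to any strictly larger interval) with initial conditions r(0) = R, s(0) = 0, φ(0) = 0, then there exists a time T₁ ∈ (0, T) with s(T₁) = 0, s(t) > 0 for all t ∈ (0, T₁), and φ(t) ∈ (−π, 0) for all t ∈ (0, T₁]; that is, for all sufficiently large R the solution launched perpendicularly from the diagonal returns to the diagonal before its inclination angle reaches −π. -/

import Mathlib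

open Real

/-- `TransSol lam n r s φ J` says that `(r, s, φ)` solves the transformed system of ODEs
on the set `J`, staying in the region `r² > s²`. -/
def TransSol (lam : ℝ) (n : ℕ) (r s φ : ℝ → ℝ) (J : Set ℝ) : Prop :=
  ∀ t ∈ J, (s t) ^ 2 < (r t) ^ 2 ∧
    HasDerivAt r (Real.sin (φ t)) t ∧
    HasDerivAt s (Real.cos (φ t)) t ∧
    HasDerivAt φ
      ((-(r t) / 2 + 2 * ((n : ℝ) - 1) * r t / ((r t) ^ 2 - (s t) ^ 2)) * Real.cos (φ t) +
        (s t / 2 + 2 * ((n : ℝ) - 1) * s t / ((r t) ^ 2 - (s t) ^ 2)) * Real.sin (φ t) +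
        lam) t

/-!
For large `R` the curve stays, up to the time `2π / |λ|`, within distance `R / 4` of its starting
point. There the term `-(r / 2) cos φ` of `φ'` dominates when `sin φ = 0`, so `φ` is decreasing
wherever it is `0` and increasing wherever it is `-π`, and is trapped in `(-π, 0)`.
The solution thus remains in a compact part of the region `s² < r²` and exists up to that time.

While `s ≥ 0`, the derivative of `φ + r s / 2` is at most `λ / 2`: adding `(r s)' / 2` cancels
`-(r / 2) cos φ`, the terms with `sin φ ≤ 0` are nonpositive, and the term that remains is of
order `1 / R`. If `s` were positive on `(0, 2π / |λ|]`, then `φ < φ + r s / 2 ≤ -π` at the right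
endpoint, contradicting `φ > -π`.
-/

open Set Filter Metric Topology

theorem neg_of_hasDerivAt_neg_of_eq_zero {f f' : ℝ → ℝ} {a b : ℝ} (hab : a < b)
    (hf : ∀ t ∈ Icc a b, HasDerivAt f (f' t) t) (ha : f a ≤ 0)
    (hf' : ∀ t ∈ Icc a b, f t = 0 → f' t < 0) : f b < 0 := by
  have hb : b ∈ Icc a b := right_mem_Icc.2 hab.le
  have nonpos : ∀ ⦃t⦄, t ∈ Icc a b → f t ≤ 0 :=
    image_le_of_deriv_right_lt_deriv_boundary'
      (fun t ht ↦ (hf t ht).continuousAt.continuousWithinAt)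
      (fun t ht ↦ (hf t (Ico_subset_Icc_self ht)).hasDerivWithinAt) ha continuousOn_const
      (fun t _ ↦ hasDerivWithinAt_const t _ 0) (fun t ht ↦ hf' t (Ico_subset_Icc_self ht))
  refine (nonpos hb).lt_of_ne fun hfb ↦ ?_
  have hsign : ∀ᶠ t in 𝓝[<] b, SignType.sign (f t) = SignType.sign (b - t) :=
    nhdsWithin_le_nhds <| eventually_nhdsWithin_sign_eq_of_deriv_neg
      ((hf b hb).deriv.trans_lt (hf' b hb hfb)) hfb
  obtain ⟨t, hsign, ht⟩ := (hsign.and (Ico_mem_nhdsLT hab)).exists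
  rw [sign_pos (sub_pos.2 ht.2), sign_eq_one_iff] at hsign
  exact hsign.not_ge (nonpos (Ico_subset_Icc_self ht))

theorem eventually_pos_nhdsGT_of_hasDerivAt {f : ℝ → ℝ} {a m : ℝ} (hf : HasDerivAt f m a)
    (hm : 0 < m) (ha : f a = 0) : ∀ᶠ t in 𝓝[>] a, 0 < f t := by
  have hsign := eventually_nhdsWithin_sign_eq_of_deriv_pos (hm.trans_eq hf.deriv.symm) ha
  filter_upwards [nhdsWithin_le_nhds hsign, self_mem_nhdsWithin] with t hsign ht
  rwa [sign_pos (sub_pos.2 ht), sign_eq_one_iff] at hsign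

theorem exists_first_zero_of_eventually_pos {f : ℝ → ℝ} {a b : ℝ} (hab : a < b)
    (hf : ContinuousOn f (Icc a b)) (ha : ∀ᶠ t in 𝓝[>] a, 0 < f t) (hb : f b ≤ 0) :
    ∃ c ∈ Ioc a b, f c = 0 ∧ ∀ t ∈ Ioo a c, 0 < f t := by
  obtain ⟨e, hae, he⟩ := mem_nhdsGT_iff_exists_Ioo_subset.1 ha
  have hae : a < e := hae
  have heb : e ≤ b := not_lt.1 fun hbe ↦ hb.not_gt (he ⟨hab, hbe⟩)
  have hclosed : IsClosed (Icc e b ∩ f ⁻¹' Iic 0) :=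
    (hf.mono (Icc_subset_Icc_left hae.le)).preimage_isClosed_of_isClosed isClosed_Icc isClosed_Iic
  obtain ⟨c, ⟨hc, hfc⟩, hleast⟩ :=
    (isCompact_Icc.of_isClosed_subset hclosed inter_subset_left).exists_isLeast
      ⟨b, right_mem_Icc.2 heb, hb⟩
  have hac : a < c := hae.trans_le hc.1
  have hpos : ∀ t ∈ Ioo a c, 0 < f t := fun t ht ↦ by
    rcases lt_or_ge t e with hte | het
    · exact he ⟨ht.1, hte⟩
    · exact not_le.1 fun hft ↦ ht.2.not_ge (hleast ⟨⟨het, ht.2.le.trans hc.2⟩, hft⟩)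
  have hlim : Tendsto f (𝓝[Ioo a c] c) (𝓝 (f c)) :=
    (hf c ⟨hac.le, hc.2⟩).mono (Ioo_subset_Icc_self.trans (Icc_subset_Icc_right hc.2))
  have := right_nhdsWithin_Ioo_neBot hac
  have hfc' : 0 ≤ f c :=
    ge_of_tendsto hlim (eventually_mem_nhdsWithin.mono fun t ht ↦ (hpos t ht).le)
  exact ⟨c, ⟨hac, hc.2⟩, le_antisymm hfc hfc', hpos⟩

theorem cauchy_map_nhdsLT_of_uniformContinuousOn {X : Type*} [UniformSpace X] {f : ℝ → X} {a b : ℝ}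
    (hf : UniformContinuousOn f (Ico a b)) (hab : a < b) : Cauchy (map f (𝓝[<] b)) := by
  have hmem : Ico a b ∈ 𝓝[<] b := Ico_mem_nhdsLT hab
  refine cauchy_map_iff.2 ⟨inferInstance, Tendsto.mono_left hf ?_⟩
  exact le_inf (cauchy_nhds.mono nhdsWithin_le_nhds).2
    (le_principal_iff.2 (prod_mem_prod hmem hmem))

section Continuation

variable {E : Type*} [NormedAddCommGroup E] [NormedSpace ℝ E]

theorem hasDerivAt_ite_lt {f f' g : ℝ → E} {c : E} {T : ℝ}
    (hf : ∀ᶠ t in 𝓝[<] T, HasDerivAt f (f' t) t) (hfg : Tendsto f (𝓝[<] T) (𝓝 (g T)))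
    (hf' : Tendsto f' (𝓝[<] T) (𝓝 c)) (hg : HasDerivAt g c T) :
    HasDerivAt (fun t ↦ if t < T then f t else g t) c T := by
  set F : ℝ → E := fun t ↦ if t < T then f t else g t
  have hFT : F T = g T := if_neg (lt_irrefl T)
  have hF : ∀ t < T, F =ᶠ[𝓝 t] f := fun t ht ↦ (gt_mem_nhds ht).mono fun x hx ↦ if_pos hx
  have hderiv : ∀ᶠ t in 𝓝[<] T, HasDerivAt F (f' t) t := by
    filter_upwards [hf, self_mem_nhdsWithin] with t hft ht using hft.congr_of_eventuallyEq (hF t ht)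
  have hleft : HasDerivWithinAt F c (Iic T) T := by
    refine hasDerivWithinAt_Iic_of_tendsto_deriv (s := Iio T ∩ {t | HasDerivAt F (f' t) t})
      (fun t ht ↦ ht.2.differentiableAt.differentiableWithinAt) ?_
      (inter_mem self_mem_nhdsWithin hderiv)
      (hf'.congr' (hderiv.mono fun t ht ↦ ht.deriv.symm))
    rw [ContinuousWithinAt, hFT]
    refine (hfg.congr' ?_).mono_left (nhdsWithin_mono T inter_subset_left)
    filter_upwards [self_mem_nhdsWithin] with t ht using (if_pos ht).symm
  have hright : HasDerivWithinAt F c (Ici T) T :=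
    hg.hasDerivWithinAt.congr (fun t ht ↦ if_neg (not_lt.2 ht)) hFT
  simpa only [Iic_union_Ici, hasDerivWithinAt_univ] using hleft.union hright

theorem hasDerivAt_ite_lt_of_integralCurves {v : E → E} {γ α : ℝ → E} {a T T' : ℝ} (haT : a < T)
    (hγ : ∀ t ∈ Ico a T, HasDerivAt γ (v (γ t)) t) (hα : ∀ t ∈ Ico T T', HasDerivAt α (v (α t)) t)
    (hγα : Tendsto γ (𝓝[<] T) (𝓝 (α T))) (hv : ContinuousAt v (α T)) {t : ℝ} (ht : t ∈ Ico a T') :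
    HasDerivAt (fun t ↦ if t < T then γ t else α t) (v (if t < T then γ t else α t)) t := by
  rcases lt_trichotomy t T with htT | rfl | hTt
  · rw [if_pos htT]
    exact (hγ t ⟨ht.1, htT⟩).congr_of_eventuallyEq ((gt_mem_nhds htT).mono fun x hx ↦ if_pos hx)
  · rw [if_neg (lt_irrefl t)]
    exact hasDerivAt_ite_lt (mem_of_superset (Ico_mem_nhdsLT haT) hγ) hγα (hv.tendsto.comp hγα)
      (hα t ⟨le_rfl, ht.2⟩)
  · rw [if_neg hTt.not_gt]
    exact (hα t ⟨hTt.le, ht.2⟩).congr_of_eventuallyEq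
      ((lt_mem_nhds hTt).mono fun x hx ↦ if_neg (not_lt.2 (le_of_lt hx)))

theorem exists_tendsto_nhdsLT_of_integralCurve_mem_compact {v : E → E} {γ : ℝ → E} {K : Set E}
    {a T : ℝ} (haT : a < T) (hK : IsCompact K) (hv : ContinuousOn v K)
    (hγ : ∀ t ∈ Ico a T, HasDerivAt γ (v (γ t)) t) (hγK : ∀ t ∈ Ico a T, γ t ∈ K) :
    ∃ x ∈ K, Tendsto γ (𝓝[<] T) (𝓝 x) := by
  obtain ⟨C, hC⟩ := hK.exists_bound_of_continuousOn hv
  have hlip : LipschitzOnWith C.toNNReal γ (Ico a T) :=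
    (convex_Ico a T).lipschitzOnWith_of_nnnorm_hasDerivWithin_le
      (fun t ht ↦ (hγ t ht).hasDerivWithinAt)
      (fun t ht ↦ by
        rw [← norm_toNNReal]
        exact Real.toNNReal_le_toNNReal (hC _ (hγK t ht)))
  exact hK.isComplete _ (cauchy_map_nhdsLT_of_uniformContinuousOn hlip.uniformContinuousOn haT)
    (tendsto_principal.2 (mem_of_superset (Ico_mem_nhdsLT haT) hγK))

theorem exists_integralCurve_extension_of_mem_compact [CompleteSpace E] {v : E → E} {γ : ℝ → E}
    {U K : Set E} {a T : ℝ} (haT : a < T) (hU : IsOpen U) (hv : ContDiffOn ℝ 1 v U)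
    (hK : IsCompact K) (hKU : K ⊆ U) (hγ : ∀ t ∈ Ico a T, HasDerivAt γ (v (γ t)) t)
    (hγK : ∀ t ∈ Ico a T, γ t ∈ K) :
    ∃ T' > T, ∃ γ' : ℝ → E, EqOn γ' γ (Iio T) ∧
      ∀ t ∈ Ico a T', γ' t ∈ U ∧ HasDerivAt γ' (v (γ' t)) t := by
  obtain ⟨x, hxK, hx⟩ := exists_tendsto_nhdsLT_of_integralCurve_mem_compact haT hK
    (hv.continuousOn.mono hKU) hγ hγK
  have hvx : ContDiffAt ℝ 1 v x := hv.contDiffAt (hU.mem_nhds (hKU hxK))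
  obtain ⟨α, rfl, ε, hε, hα⟩ :=
    hvx.exists_forall_mem_closedBall_exists_eq_forall_mem_Ioo_hasDerivAt₀ T
  have hαT : ContinuousAt α T := (hα T ⟨by linarith, by linarith⟩).continuousAt
  have hlocal : ∀ᶠ t in 𝓝[≥] T, α t ∈ U ∧ HasDerivAt α (v (α t)) t :=
    nhdsWithin_le_nhds ((hαT.eventually (hU.mem_nhds (hKU hxK))).and
      (mem_of_superset (Ioo_mem_nhds (by linarith) (by linarith)) hα))
  obtain ⟨T', hT', hαT'⟩ := mem_nhdsGE_iff_exists_Ico_subset.1 hlocal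
  refine ⟨T', hT', fun t ↦ if t < T then γ t else α t, fun t ht ↦ if_pos ht, fun t ht ↦ ⟨?_,
    hasDerivAt_ite_lt_of_integralCurves haT hγ (fun t ht ↦ (hαT' ht).2) hx hvx.continuousAt ht⟩⟩
  rcases lt_or_ge t T with htT | hTt
  · simpa only [if_pos htT] using hKU (hγK t ⟨ht.1, htT⟩)
  · simpa only [if_neg hTt.not_gt] using (hαT' ⟨hTt, ht.2⟩).1

end Continuation

/-- The right-hand side of the equation for `φ'` in the transformed system. The constant `c` stands
for `2 (n - 1)` and may be any real number. -/
noncomputable def angularSpeed (c lam r s φ : ℝ) : ℝ :=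
  (-r / 2 + c * r / (r ^ 2 - s ^ 2)) * Real.cos φ +
    (s / 2 + c * s / (r ^ 2 - s ^ 2)) * Real.sin φ + lam

/-- The vector field of the transformed system, in the coordinates `(r, s, φ)`. -/
noncomputable def transField (c lam : ℝ) (p : ℝ × ℝ × ℝ) : ℝ × ℝ × ℝ :=
  (Real.sin p.2.2, Real.cos p.2.2, angularSpeed c lam p.1 p.2.1 p.2.2)

/-- The open region `s² < r²` of the phase space, where the transformed system is regular. -/
def transRegion : Set (ℝ × ℝ × ℝ) := {p | p.2.1 ^ 2 < p.1 ^ 2}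

/-- `(r, s, φ)` solves the transformed system on `J`. As in `TransSol`, the derivatives are
two-sided, even at an endpoint of `J`. -/
def IsTransSolOn (c lam : ℝ) (r s φ : ℝ → ℝ) (J : Set ℝ) : Prop :=
  ∀ t ∈ J, s t ^ 2 < r t ^ 2 ∧ HasDerivAt r (Real.sin (φ t)) t ∧ HasDerivAt s (Real.cos (φ t)) t ∧
    HasDerivAt φ (angularSpeed c lam (r t) (s t) (φ t)) t

/-- The curve `γ_R`: a solution on `J` launched perpendicularly from the diagonal at `r = R`. -/
structure IsLaunchedOn (c lam R : ℝ) (r s φ : ℝ → ℝ) (J : Set ℝ) : Prop where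
  sol : IsTransSolOn c lam r s φ J
  r_zero : r 0 = R
  s_zero : s 0 = 0
  φ_zero : φ 0 = 0

/-- `J` is `[0, ∞)`, or it is `[0, T)` and no solution on a longer interval `[0, T')` extends
`(r, s, φ)`. -/
def IsRightMaximal (c lam : ℝ) (r s φ : ℝ → ℝ) (J : Set ℝ) : Prop :=
  J = Ici 0 ∨ ∃ T : ℝ, 0 < T ∧ J = Ico 0 T ∧ ∀ T' : ℝ, T < T' →
    ¬ ∃ r' s' φ' : ℝ → ℝ, (∀ u ∈ J, r' u = r u ∧ s' u = s u ∧ φ' u = φ u) ∧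
      IsTransSolOn c lam r' s' φ' (Ico 0 T')

/-- A time by which the solution launched at a large radius is back on the diagonal. -/
noncomputable def returnTime (lam : ℝ) : ℝ := 2 * π / -lam

/-- The largeness conditions on the launch radius `R` under which the return argument works. -/
structure IsLargeRadius (c lam R : ℝ) : Prop where
  pos : 0 < R
  returnTime_le : returnTime lam ≤ R / 4
  neg_lam_lt : -lam < R / 4
  abs_coeff_le : 5 * |c| / R ≤ -lam / 2

theorem eventually_isLargeRadius (c : ℝ) {lam : ℝ} (hlam : lam < 0) :
    ∀ᶠ R in atTop, IsLargeRadius c lam R := by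
  have hdiv : Tendsto (fun R : ℝ ↦ R / 4) atTop atTop := tendsto_id.atTop_div_const (by norm_num)
  have hcoeff : Tendsto (fun R : ℝ ↦ 5 * |c| / R) atTop (𝓝 0) :=
    tendsto_const_nhds.div_atTop tendsto_id
  filter_upwards [eventually_gt_atTop 0, hdiv.eventually_ge_atTop (returnTime lam),
    hdiv.eventually_gt_atTop (-lam), hcoeff.eventually_le_const (by linarith : 0 < -lam / 2)]
    with R hpos htime hlt hle using ⟨hpos, htime, hlt, hle⟩

theorem isOpen_transRegion : IsOpen transRegion :=
  isOpen_lt (by fun_prop) (by fun_prop)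

theorem contDiffOn_transField (c lam : ℝ) : ContDiffOn ℝ 1 (transField c lam) transRegion := by
  have hden : ∀ p ∈ transRegion, p.1 ^ 2 - p.2.1 ^ 2 ≠ 0 := fun p hp ↦ (sub_pos.2 hp).ne'
  unfold transField angularSpeed
  fun_prop (disch := assumption)

theorem isTransSolOn_iff_forall_hasDerivAt {c lam : ℝ} {r s φ : ℝ → ℝ} {J : Set ℝ} :
    IsTransSolOn c lam r s φ J ↔ ∀ t ∈ J, (r t, s t, φ t) ∈ transRegion ∧
      HasDerivAt (fun t ↦ (r t, s t, φ t)) (transField c lam (r t, s t, φ t)) t :=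
  forall₂_congr fun _ _ ↦ and_congr_right fun _ ↦
    ⟨fun h ↦ h.1.prodMk (h.2.1.prodMk h.2.2), fun h ↦ ⟨h.fst, h.snd.fst, h.snd.snd⟩⟩

theorem IsTransSolOn.exists_extension_of_mem_compact {c lam : ℝ} {r s φ : ℝ → ℝ} {T : ℝ}
    {K : Set (ℝ × ℝ × ℝ)} (h : IsTransSolOn c lam r s φ (Ico 0 T)) (hT : 0 < T) (hK : IsCompact K)
    (hKU : K ⊆ transRegion) (hmem : ∀ t ∈ Ico 0 T, (r t, s t, φ t) ∈ K) :
    ∃ T' > T, ∃ r' s' φ' : ℝ → ℝ, (∀ u ∈ Ico 0 T, r' u = r u ∧ s' u = s u ∧ φ' u = φ u) ∧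
      IsTransSolOn c lam r' s' φ' (Ico 0 T') := by
  rw [isTransSolOn_iff_forall_hasDerivAt] at h
  obtain ⟨T', hT', γ, hγ, hγsol⟩ := exists_integralCurve_extension_of_mem_compact hT
    isOpen_transRegion (contDiffOn_transField c lam) hK hKU (fun t ht ↦ (h t ht).2) hmem
  refine ⟨T', hT', fun t ↦ (γ t).1, fun t ↦ (γ t).2.1, fun t ↦ (γ t).2.2, fun u hu ↦ ?_,
    isTransSolOn_iff_forall_hasDerivAt.2 hγsol⟩
  simp only [hγ hu.2, and_self]

section Estimates

variable {c lam R r s φ : ℝ}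

theorem sq_div_four_le_sq_sub_sq (hr : |r - R| ≤ R / 4) (hs : |s| ≤ R / 4) :
    R ^ 2 / 4 ≤ r ^ 2 - s ^ 2 := by
  rw [abs_le] at hr hs
  have hsub : R / 2 ≤ r - s := by linarith
  have hadd : R / 2 ≤ r + s := by linarith
  calc R ^ 2 / 4 = R / 2 * (R / 2) := by ring
    _ ≤ (r - s) * (r + s) := mul_le_mul hsub hadd (by linarith) (by linarith)
    _ = r ^ 2 - s ^ 2 := by ring

theorem abs_mul_div_sq_sub_sq_le (hR : 0 < R) (hr : |r - R| ≤ R / 4) (hs : |s| ≤ R / 4) :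
    |c * r / (r ^ 2 - s ^ 2)| ≤ 5 * |c| / R := by
  have hD := sq_div_four_le_sq_sub_sq hr hs
  have hr' : |r| ≤ 5 * R / 4 := by
    rw [abs_le] at hr ⊢
    constructor <;> linarith
  calc |c * r / (r ^ 2 - s ^ 2)| = |c| * |r| / |r ^ 2 - s ^ 2| := by rw [abs_div, abs_mul]
    _ ≤ |c| * (5 * R / 4) / (R ^ 2 / 4) := by
      gcongr
      exact hD.trans (le_abs_self _)
    _ = 5 * |c| / R := by field_simp

namespace IsLargeRadius

theorem angularSpeed_zero_neg (hR : IsLargeRadius c lam R) (hr : |r - R| ≤ R / 4)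
    (hs : |s| ≤ R / 4) : angularSpeed c lam r s 0 < 0 := by
  have hA := abs_le.1 ((abs_mul_div_sq_sub_sq_le hR.pos hr hs).trans hR.abs_coeff_le)
  have hr' := abs_le.1 hr
  simp only [angularSpeed, Real.cos_zero, Real.sin_zero, mul_one, mul_zero, add_zero]
  linarith [hR.neg_lam_lt]

theorem angularSpeed_neg_pi_pos (hR : IsLargeRadius c lam R) (hr : |r - R| ≤ R / 4)
    (hs : |s| ≤ R / 4) : 0 < angularSpeed c lam r s (-π) := by
  have hA := abs_le.1 ((abs_mul_div_sq_sub_sq_le hR.pos hr hs).trans hR.abs_coeff_le)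
  have hr' := abs_le.1 hr
  simp only [angularSpeed, Real.cos_neg, Real.sin_neg, Real.cos_pi, Real.sin_pi]
  linarith [hR.neg_lam_lt]

theorem abs_coeff_le_sq_sub_sq (hR : IsLargeRadius c lam R) (hr : |r - R| ≤ R / 4)
    (hs : |s| ≤ R / 4) : |c| ≤ r ^ 2 - s ^ 2 := by
  have hc : 5 * |c| ≤ R ^ 2 / 4 := by
    have := (div_le_iff₀ hR.pos).1 hR.abs_coeff_le
    nlinarith [hR.pos, hR.neg_lam_lt]
  linarith [abs_nonneg c, sq_div_four_le_sq_sub_sq hr hs]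

/-- The left-hand side is `(φ + r s / 2)'` along a solution. -/
theorem angularSpeed_add_le (hR : IsLargeRadius c lam R) (hr : |r - R| ≤ R / 4)
    (hs : |s| ≤ R / 4) (hs₀ : 0 ≤ s) (hφ : φ ∈ Icc (-π) 0) :
    angularSpeed c lam r s φ + (Real.sin φ * s + r * Real.cos φ) / 2 ≤ lam / 2 := by
  have hD : |c| ≤ r ^ 2 - s ^ 2 := hR.abs_coeff_le_sq_sub_sq hr hs
  have hcos : c * r / (r ^ 2 - s ^ 2) * Real.cos φ ≤ -lam / 2 :=
    calc c * r / (r ^ 2 - s ^ 2) * Real.cos φ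
      _ ≤ |c * r / (r ^ 2 - s ^ 2)| * |Real.cos φ| := by
        rw [← abs_mul]
        exact le_abs_self _
      _ ≤ |c * r / (r ^ 2 - s ^ 2)| :=
        mul_le_of_le_one_right (abs_nonneg _) (Real.abs_cos_le_one φ)
      _ ≤ -lam / 2 := (abs_mul_div_sq_sub_sq_le hR.pos hr hs).trans hR.abs_coeff_le
  have hcoeff : 0 ≤ 1 + c / (r ^ 2 - s ^ 2) := by
    have : |c / (r ^ 2 - s ^ 2)| ≤ 1 := by
      rw [abs_div]
      exact div_le_one_of_le₀ (hD.trans (le_abs_self _)) (abs_nonneg _)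
    linarith [(abs_le.1 this).1]
  have hsin : s * (1 + c / (r ^ 2 - s ^ 2)) * Real.sin φ ≤ 0 :=
    mul_nonpos_of_nonneg_of_nonpos (mul_nonneg hs₀ hcoeff)
      (Real.sin_nonpos_of_nonpos_of_neg_pi_le hφ.2 hφ.1)
  calc angularSpeed c lam r s φ + (Real.sin φ * s + r * Real.cos φ) / 2
    _ = c * r / (r ^ 2 - s ^ 2) * Real.cos φ + s * (1 + c / (r ^ 2 - s ^ 2)) * Real.sin φ +
        lam := by
      unfold angularSpeed
      ring
    _ ≤ lam / 2 := by linarith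

end IsLargeRadius

end Estimates

namespace IsLaunchedOn

variable {c lam R : ℝ} {r s φ : ℝ → ℝ} {b : ℝ}

theorem mono {J J' : Set ℝ} (h : IsLaunchedOn c lam R r s φ J) (hJ : J' ⊆ J) :
    IsLaunchedOn c lam R r s φ J' :=
  ⟨fun t ht ↦ h.sol t (hJ ht), h.r_zero, h.s_zero, h.φ_zero⟩

theorem abs_r_sub_le (h : IsLaunchedOn c lam R r s φ (Icc 0 b)) (hb : 0 ≤ b) : |r b - R| ≤ b := by
  simpa [h.r_zero] using norm_image_sub_le_of_norm_deriv_le_segment'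
    (fun t ht ↦ (h.sol t ht).2.1.hasDerivWithinAt) (fun t _ ↦ Real.abs_sin_le_one (φ t)) b
    (right_mem_Icc.2 hb)

theorem abs_s_le (h : IsLaunchedOn c lam R r s φ (Icc 0 b)) (hb : 0 ≤ b) : |s b| ≤ b := by
  simpa [h.s_zero] using norm_image_sub_le_of_norm_deriv_le_segment'
    (fun t ht ↦ (h.sol t ht).2.2.1.hasDerivWithinAt) (fun t _ ↦ Real.abs_cos_le_one (φ t)) b
    (right_mem_Icc.2 hb)

theorem near_start (h : IsLaunchedOn c lam R r s φ (Icc 0 b)) (hR : IsLargeRadius c lam R)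
    (hb : b ≤ returnTime lam) {t : ℝ} (ht : t ∈ Icc 0 b) : |r t - R| ≤ R / 4 ∧ |s t| ≤ R / 4 := by
  have ht' : t ≤ R / 4 := (ht.2.trans hb).trans hR.returnTime_le
  have h' := h.mono (Icc_subset_Icc_right ht.2)
  exact ⟨(h'.abs_r_sub_le ht.1).trans ht', (h'.abs_s_le ht.1).trans ht'⟩

theorem φ_neg (h : IsLaunchedOn c lam R r s φ (Icc 0 b)) (hR : IsLargeRadius c lam R)
    (hb₀ : 0 < b) (hb : b ≤ returnTime lam) : φ b < 0 := by
  refine neg_of_hasDerivAt_neg_of_eq_zero hb₀ (fun t ht ↦ (h.sol t ht).2.2.2) h.φ_zero.le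
    fun t ht hφt ↦ ?_
  obtain ⟨hr, hs⟩ := h.near_start hR hb ht
  rw [hφt]
  exact hR.angularSpeed_zero_neg hr hs

theorem neg_pi_lt_φ (h : IsLaunchedOn c lam R r s φ (Icc 0 b)) (hR : IsLargeRadius c lam R)
    (hb₀ : 0 < b) (hb : b ≤ returnTime lam) : -π < φ b := by
  refine sub_neg.1 (neg_of_hasDerivAt_neg_of_eq_zero (f := fun t ↦ -π - φ t) hb₀
    (fun t ht ↦ (h.sol t ht).2.2.2.const_sub (-π)) (by simp [h.φ_zero, Real.pi_pos.le])
    fun t ht hφt ↦ ?_)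
  obtain ⟨hr, hs⟩ := h.near_start hR hb ht
  rw [← sub_eq_zero.1 hφt]
  exact neg_neg_of_pos (hR.angularSpeed_neg_pi_pos hr hs)

theorem φ_mem_Icc (h : IsLaunchedOn c lam R r s φ (Icc 0 b)) (hR : IsLargeRadius c lam R)
    (hb : b ≤ returnTime lam) {t : ℝ} (ht : t ∈ Icc 0 b) : φ t ∈ Icc (-π) 0 := by
  rcases ht.1.eq_or_lt with rfl | ht₀
  · simp [h.φ_zero, Real.pi_pos.le]
  · have h' := h.mono (Icc_subset_Icc_right ht.2)
    exact ⟨(h'.neg_pi_lt_φ hR ht₀ (ht.2.trans hb)).le, (h'.φ_neg hR ht₀ (ht.2.trans hb)).le⟩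

theorem φ_add_le (h : IsLaunchedOn c lam R r s φ (Icc 0 b)) (hR : IsLargeRadius c lam R)
    (hb₀ : 0 ≤ b) (hb : b ≤ returnTime lam) (hs : ∀ t ∈ Icc 0 b, 0 ≤ s t) :
    φ b + r b * s b / 2 ≤ lam / 2 * b := by
  have hderiv : ∀ t ∈ Icc 0 b, HasDerivAt (fun t ↦ φ t + r t * s t / 2)
      (angularSpeed c lam (r t) (s t) (φ t) +
        (Real.sin (φ t) * s t + r t * Real.cos (φ t)) / 2) t := fun t ht ↦
    have ⟨_, hr', hs', hφ'⟩ := h.sol t ht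
    hφ'.add ((hr'.mul hs').div_const 2)
  have hlin : ∀ t, HasDerivAt (fun t ↦ lam / 2 * t) (lam / 2) t := fun t ↦ by
    simpa using (hasDerivAt_id t).const_mul (lam / 2)
  refine image_le_of_deriv_right_le_deriv_boundary
    (fun t ht ↦ (hderiv t ht).continuousAt.continuousWithinAt)
    (fun t ht ↦ (hderiv t (Ico_subset_Icc_self ht)).hasDerivWithinAt)
    (by simp [h.φ_zero, h.s_zero]) (fun t _ ↦ (hlin t).continuousAt.continuousWithinAt)
    (fun t _ ↦ (hlin t).hasDerivWithinAt) (fun t ht ↦ ?_) (right_mem_Icc.2 hb₀)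
  have ht := Ico_subset_Icc_self ht
  obtain ⟨hrR, hsR⟩ := h.near_start hR hb ht
  exact hR.angularSpeed_add_le hrR hsR (hs t ht) (h.φ_mem_Icc hR hb ht)

theorem exists_s_nonpos (h : IsLaunchedOn c lam R r s φ (Icc 0 (returnTime lam)))
    (hR : IsLargeRadius c lam R) (hlam : lam < 0) : ∃ t ∈ Ioc 0 (returnTime lam), s t ≤ 0 := by
  have htime : 0 < returnTime lam := div_pos Real.two_pi_pos (neg_pos.2 hlam)
  by_contra! hpos
  have hs : ∀ t ∈ Icc 0 (returnTime lam), 0 ≤ s t := fun t ht ↦ by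
    rcases ht.1.eq_or_lt with rfl | ht₀
    · exact h.s_zero.ge
    · exact (hpos t ⟨ht₀, ht.2⟩).le
  have hrs : 0 < r (returnTime lam) * s (returnTime lam) := by
    have hr := (h.near_start hR le_rfl (right_mem_Icc.2 htime.le)).1
    refine mul_pos ?_ (hpos _ (right_mem_Ioc.2 htime))
    linarith [hR.pos, (abs_le.1 hr).1]
  have hdecay : lam / 2 * returnTime lam = -π := by
    have := hlam.ne
    unfold returnTime
    field_simp
  linarith [h.φ_add_le hR htime.le le_rfl hs, h.neg_pi_lt_φ hR htime le_rfl]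

theorem Icc_returnTime_subset {J : Set ℝ} (h : IsLaunchedOn c lam R r s φ J)
    (hmax : IsRightMaximal c lam r s φ J) (hR : IsLargeRadius c lam R) :
    Icc 0 (returnTime lam) ⊆ J := by
  rcases hmax with rfl | ⟨T, hT, rfl, hmax⟩
  · exact Icc_subset_Ici_self
  suffices returnTime lam < T from Icc_subset_Ico_right this
  by_contra! hTtime
  let K : Set (ℝ × ℝ × ℝ) := closedBall R (R / 4) ×ˢ closedBall 0 (R / 4) ×ˢ Icc (-π) 0
  have hK : IsCompact K :=
    (isCompact_closedBall _ _).prod ((isCompact_closedBall _ _).prod isCompact_Icc)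
  have hK_iff : ∀ x y z, (x, y, z) ∈ K ↔ |x - R| ≤ R / 4 ∧ |y| ≤ R / 4 ∧ z ∈ Icc (-π) 0 :=
    fun x y z ↦ by simp only [K, mem_prod, mem_closedBall, Real.dist_eq, sub_zero]
  have hKU : K ⊆ transRegion := fun ⟨x, y, z⟩ hp ↦ by
    obtain ⟨hx, hy, -⟩ := (hK_iff x y z).1 hp
    exact sub_pos.1 ((div_pos (pow_pos hR.pos 2) four_pos).trans_le
      (sq_div_four_le_sq_sub_sq hx hy))
  have hmem : ∀ t ∈ Ico 0 T, (r t, s t, φ t) ∈ K := fun t ht ↦ by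
    have h' := h.mono (Icc_subset_Ico_right ht.2)
    have httime := ht.2.le.trans hTtime
    obtain ⟨hr, hs⟩ := h'.near_start hR httime (right_mem_Icc.2 ht.1)
    exact (hK_iff _ _ _).2 ⟨hr, hs, h'.φ_mem_Icc hR httime (right_mem_Icc.2 ht.1)⟩
  obtain ⟨T', hT', hext⟩ := h.sol.exists_extension_of_mem_compact hT hK hKU hmem
  exact hmax T' hT' hext

theorem exists_first_return (h : IsLaunchedOn c lam R r s φ (Icc 0 (returnTime lam)))
    (hR : IsLargeRadius c lam R) (hlam : lam < 0) :
    ∃ T₁ ∈ Ioc 0 (returnTime lam), s T₁ = 0 ∧ ∀ t ∈ Ioo 0 T₁, 0 < s t := by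
  obtain ⟨t₁, ht₁, hst₁⟩ := h.exists_s_nonpos hR hlam
  have hcont : ContinuousOn s (Icc 0 t₁) := fun t ht ↦
    (h.sol t ⟨ht.1, ht.2.trans ht₁.2⟩).2.2.1.continuousAt.continuousWithinAt
  have hs' : HasDerivAt s 1 0 := by
    simpa [h.φ_zero] using (h.sol 0 ⟨le_rfl, ht₁.1.le.trans ht₁.2⟩).2.2.1
  obtain ⟨T₁, hT₁, hreturn⟩ := exists_first_zero_of_eventually_pos ht₁.1 hcont
    (eventually_pos_nhdsGT_of_hasDerivAt hs' one_pos h.s_zero) hst₁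
  exact ⟨T₁, ⟨hT₁.1, hT₁.2.trans ht₁.2⟩, hreturn⟩

end IsLaunchedOn

theorem returns_to_diagonal_for_large_R_general (c : ℝ) {lam : ℝ} (hlam : lam < 0) :
    ∃ R₀ : ℝ, 0 < R₀ ∧ ∀ R : ℝ, R₀ ≤ R → ∀ (r s φ : ℝ → ℝ) (J : Set ℝ),
      IsLaunchedOn c lam R r s φ J → IsRightMaximal c lam r s φ J →
        ∃ T₁ ∈ J, 0 < T₁ ∧ s T₁ = 0 ∧ (∀ t, 0 < t → t < T₁ → 0 < s t) ∧
          ∀ t, 0 < t → t ≤ T₁ → -π < φ t ∧ φ t < 0 := by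
  obtain ⟨R₀, hR₀⟩ := eventually_atTop.1 (eventually_isLargeRadius c hlam)
  refine ⟨R₀, (hR₀ R₀ le_rfl).pos, fun R hR r s φ J h hmax ↦ ?_⟩
  have hlarge := hR₀ R hR
  have hJ := h.Icc_returnTime_subset hmax hlarge
  obtain ⟨T₁, ⟨hpos, hle⟩, hzero, hbefore⟩ := (h.mono hJ).exists_first_return hlarge hlam
  refine ⟨T₁, hJ ⟨hpos.le, hle⟩, hpos, hzero, fun t h₀ h₁ ↦ hbefore t ⟨h₀, h₁⟩, fun t h₀ h₁ ↦ ?_⟩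
  have ht := (h.mono hJ).mono (Icc_subset_Icc_right (h₁.trans hle))
  exact ⟨ht.neg_pi_lt_φ hlarge h₀ (h₁.trans hle), ht.φ_neg hlarge h₀ (h₁.trans hle)⟩

/-- For all sufficiently large `R`, the solution of the transformed system launched
perpendicularly from the diagonal (`r(0) = R`, `s(0) = 0`, `φ(0) = 0`), considered on its
right-maximal interval of existence `[0, T)` (with `0 < T ≤ ∞`), returns to the diagonal
(`s = 0`) at some positive time while its inclination angle stays in `(−π, 0)`. -/
theorem returns_to_diagonal_for_large_R
    (lam : ℝ) (hlam : lam < 0) (n : ℕ) (hn : 2 ≤ n) :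
    ∃ R₀ : ℝ, 0 < R₀ ∧
      ∀ R : ℝ, R₀ ≤ R →
        ∀ (r s φ : ℝ → ℝ) (J : Set ℝ),
          TransSol lam n r s φ J →
          r 0 = R → s 0 = 0 → φ 0 = 0 →
          (J = Set.Ici (0 : ℝ) ∨
            ∃ T : ℝ, 0 < T ∧ J = Set.Ico (0 : ℝ) T ∧
              ∀ T' : ℝ, T < T' →
                ¬ ∃ r' s' φ' : ℝ → ℝ,
                    (∀ u ∈ J, r' u = r u ∧ s' u = s u ∧ φ' u = φ u) ∧
                    TransSol lam n r' s' φ' (Set.Ico (0 : ℝ) T')) →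
          ∃ T₁ : ℝ, T₁ ∈ J ∧ 0 < T₁ ∧ s T₁ = 0 ∧
            (∀ t : ℝ, 0 < t → t < T₁ → 0 < s t) ∧
            (∀ t : ℝ, 0 < t → t ≤ T₁ → -π < φ t ∧ φ t < 0) :=
  have ⟨R₀, hR₀, hreturn⟩ := returns_to_diagonal_for_large_R_general (2 * ((n : ℝ) - 1)) hlam
  ⟨R₀, hR₀, fun R hR r s φ J hsol hr hs hφ ↦ hreturn R hR r s φ J ⟨hsol, hr, hs, hφ⟩⟩
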